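/- Let G be a group, and let π : G → U(H) and ρ : G → U(K) be unitary representations. Suppose T : K → H is a nonzero Hilbert–Schmidt operator intertwining ρ and π, i.e. π(g) T = T ρ(g) for all g ∈ G. Then π and ρ admit a common nonzero finite-dimensional subrepresentation: there exist a nonzero finite-dimensional π-invariant subspace E ⊆ H and a ρ-invariant subspace F ⊆ K such that π restricted to E is unitarily equivalent to ρ restricted to F. -/

import Mathlib

open ContinuousLinearMap in
theorem hs_compact
    {H : Type*} [NormedAddCommGroup H] [InnerProductSpace ℂ H] [CompleteSpace H]
    {K : Type*} [NormedAddCommGroup K] [InnerProductSpace ℂ K] [CompleteSpace K]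
    {κ : Type*} (b : HilbertBasis κ ℂ K) (T : K →L[ℂ] H)
    (hHS : Summable fun j : κ => ‖T (b j)‖ ^ 2) : IsCompactOperator T := by
  let f : κ → (K →L[ℂ] H) := fun j => (innerSL ℂ (b j)).smulRight (T (b j))
  have hfa : ∀ j x, f j x = inner ℂ (b j) x • T (b j) := fun j x => by simp [f]
  have hbound : ∀ t : Finset κ, ‖∑ j ∈ t, f j‖ ≤ √(∑ j ∈ t, ‖T (b j)‖ ^ 2) := by
    intro t
    refine ContinuousLinearMap.opNorm_le_bound _ (Real.sqrt_nonneg _) fun x => ?_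
    have h1 : ‖(∑ j ∈ t, f j) x‖ ≤ ∑ j ∈ t, ‖T (b j)‖ * ‖inner ℂ (b j) x‖ := by
      rw [_root_.sum_apply]
      refine (norm_sum_le _ _).trans (Finset.sum_le_sum fun j _ => ?_)
      rw [hfa, norm_smul, mul_comm]
    have h2 := Real.sum_mul_le_sqrt_mul_sqrt t (fun j => ‖T (b j)‖) (fun j => ‖inner ℂ (b j) x‖)
    have h3 : √(∑ j ∈ t, ‖inner ℂ (b j) x‖ ^ 2) ≤ ‖x‖ :=
      Real.sqrt_le_left (norm_nonneg x) |>.mpr (b.orthonormal.sum_inner_products_le x)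
    exact h1.trans (h2.trans (mul_le_mul_of_nonneg_left h3 (Real.sqrt_nonneg _)))
  have hs : Summable f := by
    rw [summable_iff_vanishing_norm]
    intro ε hε
    obtain ⟨s, hs⟩ := summable_iff_vanishing_norm.1 hHS (ε ^ 2) (by positivity)
    refine ⟨s, fun t ht => (hbound t).trans_lt ?_⟩
    have := (le_abs_self _).trans_lt (hs t ht)
    rw [Real.sqrt_lt' hε]
    exact this
  have hsum : ∑' j, f j = T := by
    ext x
    have h1 : HasSum (fun j => f j x) ((∑' j, f j) x) :=
      hs.hasSum.mapL (ContinuousLinearMap.apply ℂ H x)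
    have h2 : HasSum (fun j => f j x) (T x) := by
      have := (b.hasSum_repr x).mapL T
      simpa [hfa, HilbertBasis.repr_apply_apply] using this
    exact h1.unique h2
  have hT : Filter.Tendsto (fun s : Finset κ => ∑ j ∈ s, f j) Filter.atTop (nhds T) := by
    have := hs.hasSum
    rwa [hsum] at this
  refine isCompactOperator_of_tendsto hT (Filter.Eventually.of_forall fun s => ?_)
  have hc : ∀ j, f j ∈ compactOperator (RingHom.id ℂ) K H := fun j => by
    have h : IsCompactOperator (innerSL ℂ (b j) : K →L[ℂ] ℂ) :=
      isCompactOperator_of_locallyCompactSpace_dom _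
    exact h.clm_comp ((ContinuousLinearMap.id ℂ ℂ).smulRight (T (b j)))
  exact (compactOperator (RingHom.id ℂ) K H).sum_mem fun j _ => hc j


/-- If `T : K → H` is a nonzero Hilbert–Schmidt operator intertwining
unitary representations `ρ` (on `K`) and `π` (on `H`) of a group `G`, then `π` and `ρ`
have a common nonzero finite-dimensional subrepresentation: there are invariant
subspaces `E ⊆ H`, `F ⊆ K` (with `E ≠ 0` finite dimensional) and a surjective isometry
`V : E → F` intertwining the restrictions. -/
theorem stmt_7
    {G : Type*} [Group G]
    {H : Type*} [NormedAddCommGroup H] [InnerProductSpace ℂ H] [CompleteSpace H]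
    {K : Type*} [NormedAddCommGroup K] [InnerProductSpace ℂ K] [CompleteSpace K]
    (π : G →* unitary (H →L[ℂ] H)) (ρ : G →* unitary (K →L[ℂ] K))
    {κ : Type*} (b : HilbertBasis κ ℂ K)
    (T : K →L[ℂ] H)
    (hHS : Summable fun j : κ => ‖T (b j)‖ ^ 2)
    (hT0 : T ≠ 0)
    (hint : ∀ g : G, ((π g : H →L[ℂ] H)).comp T = T.comp ((ρ g : K →L[ℂ] K))) :
    ∃ (E : Submodule ℂ H) (F : Submodule ℂ K),
      E ≠ ⊥ ∧ FiniteDimensional ℂ E ∧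
      (∀ g : G, ∀ x ∈ E, (π g : H →L[ℂ] H) x ∈ E) ∧
      (∀ g : G, ∀ y ∈ F, (ρ g : K →L[ℂ] K) y ∈ F) ∧
      ∃ V : E ≃ₗᵢ[ℂ] F,
        ∀ (g : G) (x y : E), (π g : H →L[ℂ] H) (x : H) = (y : H) →
          (ρ g : K →L[ℂ] K) ((V x : K)) = ((V y : K)) := by
  set S : K →L[ℂ] K := (ContinuousLinearMap.adjoint T).comp T with hS
  have hSin : ∀ x y, inner ℂ (S x) y = inner ℂ (T x) (T y) := fun x y => by
    simp [hS, ContinuousLinearMap.adjoint_inner_left]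
  have hSc : IsCompactOperator S := (hs_compact b T hHS).clm_comp (ContinuousLinearMap.adjoint T)
  have hSs : S.IsSymmetric := by
    intro x y
    change inner ℂ (S x) y = inner ℂ x (S y)
    rw [hSin, ← inner_conj_symm x, hSin, inner_conj_symm]
  have hTS : ∀ x, S x = 0 → T x = 0 := fun x hx => by
    have := hSin x x
    rw [hx, inner_zero_left] at this
    exact inner_self_eq_zero.1 this.symm
  have hS0 : S ≠ 0 := fun h => hT0 (by ext x; exact hTS x (by simp [h]))
  have hex : ∃ μ, Module.End.HasEigenvalue (S : Module.End ℂ K) μ ∧ μ ≠ 0 := by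
    by_contra! h
    exact hS0 ((ContinuousLinearMap.eq_zero_of_forall_hasEigenvalue_eq_zero hSc hSs).1 h)
  obtain ⟨μ, hμ, hμ0⟩ := hex
  have hfd := ContinuousLinearMap.finite_dimensional_eigenspace hSc μ hμ0
  set F := Module.End.eigenspace (S : Module.End ℂ K) μ with hF
  have hFm : ∀ x, x ∈ F ↔ S x = μ • x := fun x => Module.End.mem_eigenspace_iff
  have hnorm : ∀ x ∈ F, ‖T x‖ ^ 2 = μ.re * ‖x‖ ^ 2 := fun x hx => by
    have h := hSin x x
    rw [(hFm x).1 hx, inner_smul_left, inner_self_eq_norm_sq_to_K, inner_self_eq_norm_sq_to_K] at h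
    have := congrArg Complex.re h
    simp [← Complex.ofReal_pow] at this
    exact this.symm
  obtain ⟨v, hvF, hv0⟩ := hμ.exists_hasEigenvector
  have hvF : v ∈ F := hvF
  have hTv : T v ≠ 0 := fun h => by
    have : μ • v = 0 := by rw [← (hFm v).1 hvF]; simp [hS, h]
    exact (smul_ne_zero hμ0 hv0) this
  have hpos : 0 < μ.re := by
    have h := hnorm v hvF
    have h1 : 0 < ‖T v‖ ^ 2 := by positivity
    have h2 : 0 < ‖v‖ ^ 2 := by positivity
    rw [h] at h1
    exact (mul_pos_iff_of_pos_right h2).1 h1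
  let e : F →ₗᵢ[ℂ] H :=
    { toLinearMap := (((√μ.re)⁻¹ : ℝ) : ℂ) • ((T : K →ₗ[ℂ] H).comp F.subtype)
      norm_map' := fun x => by
        have h : ‖T x‖ = √μ.re * ‖x‖ := by
          rw [← Real.sqrt_sq (norm_nonneg (T x)), hnorm x x.2, Real.sqrt_mul hpos.le]
          simp
        have hr : √μ.re ≠ 0 := (Real.sqrt_pos.2 hpos).ne'
        have : ‖(((√μ.re)⁻¹ : ℝ) : ℂ) • T (x : K)‖ = ‖x‖ := by
          rw [norm_smul, h, Complex.norm_real, Real.norm_of_nonneg (by positivity)]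
          field_simp
        exact this }
  have hea : ∀ x : F, e x = (((√μ.re)⁻¹ : ℝ) : ℂ) • T (x : K) := fun x => rfl
  have hint' : ∀ g x, (π g : H →L[ℂ] H) (T x) = T ((ρ g : K →L[ℂ] K) x) := fun g x =>
    congrArg (fun A : K →L[ℂ] H => A x) (hint g)
  have hadj : ∀ g y, ContinuousLinearMap.adjoint T ((π g : H →L[ℂ] H) y)
      = (ρ g : K →L[ℂ] K) (ContinuousLinearMap.adjoint T y) := fun g y => by
    have h := congrArg ContinuousLinearMap.adjoint (hint g⁻¹)
    rw [ContinuousLinearMap.adjoint_comp, ContinuousLinearMap.adjoint_comp] at h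
    simp only [map_inv, ← ContinuousLinearMap.star_eq_adjoint, ← Unitary.star_eq_inv,
      Unitary.coe_star, star_star] at h
    exact congrArg (fun A : H →L[ℂ] K => A y) h
  have hFinv : ∀ g : G, ∀ y ∈ F, (ρ g : K →L[ℂ] K) y ∈ F := fun g y hy => by
    rw [hFm]
    have : S ((ρ g : K →L[ℂ] K) y) = (ρ g : K →L[ℂ] K) (S y) := by
      simp only [hS, ContinuousLinearMap.comp_apply]
      rw [← hint', hadj]
    rw [this, (hFm y).1 hy, map_smul]
  have hecomm : ∀ g (x : F), (π g : H →L[ℂ] H) (e x) = e ⟨(ρ g : K →L[ℂ] K) x, hFinv g x x.2⟩ :=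
    fun g x => by rw [hea, hea, map_smul, hint']
  refine ⟨LinearMap.range e.toLinearMap, F, ?_, inferInstance, ?_, hFinv,
    e.equivRange.symm, ?_⟩
  · intro h
    have : e ⟨v, hvF⟩ ∈ LinearMap.range e.toLinearMap := ⟨_, rfl⟩
    rw [h, Submodule.mem_bot, ← norm_eq_zero, e.norm_map] at this
    exact hv0 (by simpa using this)
  · rintro g _ ⟨x, rfl⟩
    exact ⟨_, (hecomm g x).symm⟩
  · intro g x y hxy
    obtain ⟨a, rfl⟩ := e.equivRange.surjective x
    obtain ⟨c, rfl⟩ := e.equivRange.surjective y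
    rw [LinearIsometryEquiv.symm_apply_apply, LinearIsometryEquiv.symm_apply_apply]
    have h : (π g : H →L[ℂ] H) (e a) = e c := hxy
    rw [hecomm] at h
    exact congrArg Subtype.val (e.injective h)
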